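/- Fix x ∈ ℝ², let d ∈ {1,2} with d' the other index, and let f : ℝ² → ℝ be 4 times continuously differentiable. For h > 0 and j ∈ ℤ², let A_h(j) = h^{−2} ∫_{x + h j + [0,h]²} f be the cell average, and let B_h = h^{−1} ∫_{F} f dl be the average of f over the face F = { x + h e^d + s h e^{d'} : s ∈ [0,1] } (the higher face of the cell j = 0 in dimension d). Then there exist C > 0 and h₀ > 0 such that for all 0 < h < h₀, | B_h − ( (7/12)(A_h(0) + A_h(e^d)) − (1/12)(A_h(−e^d) + A_h(2e^d)) ) | ≤ C h⁴. -/

import Mathlib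

open MeasureTheory

noncomputable section

/-- The square cell of side `h` with multi-index `j` anchored at `x`. -/
def fvCell (x : EuclideanSpace ℝ (Fin 2)) (h : ℝ) (j : Fin 2 → ℤ) :
    Set (EuclideanSpace ℝ (Fin 2)) :=
  {y | ∀ i, y i ∈ Set.Icc (x i + h * (j i : ℝ)) (x i + h * (j i : ℝ) + h)}

/-- The average of `f` over the cell of side `h` and multi-index `j`
anchored at `x`. -/
def cellAvg (f : EuclideanSpace ℝ (Fin 2) → ℝ) (x : EuclideanSpace ℝ (Fin 2))
    (h : ℝ) (j : Fin 2 → ℤ) : ℝ :=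
  (1 / h ^ 2) * ∫ y in fvCell x h j, f y

/-- The average of `f` over the segment from `a` to `b` (equal to `1/|b-a|`
times the one-dimensional Lebesgue integral of `f` along the segment). -/
def segAvg (f : EuclideanSpace ℝ (Fin 2) → ℝ) (a b : EuclideanSpace ℝ (Fin 2)) : ℝ :=
  ∫ s in (0 : ℝ)..1, f (a + s • (b - a))

/-- The `i`-th standard basis vector of ℝ². -/
def ev (i : Fin 2) : EuclideanSpace ℝ (Fin 2) := EuclideanSpace.single i 1

/-!
Let `g` be the restriction of `f` to a line parallel to `e^d`, with primitive `G`. The averages of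
`g` over consecutive intervals of length `h` are difference quotients of `G`, and the combination
with weights `7/12` and `-1/12` of the four averages around a point `b` is exactly the five-point
central-difference approximation of `G' b = g b`. That stencil is exact on quartic polynomials, so
its error is `O(h⁴)`, with a constant depending only on a bound for the fourth derivative of `g`.
The bound is uniform over the lines crossing the face, and integrating along the face (Fubini)
turns it into the claim.
-/

section Interpolation

variable {E : Type*} [NormedAddCommGroup E] [NormedSpace ℝ E]

theorem norm_sub_sum_taylor_le [CompleteSpace E] {f : ℝ → E} {n : ℕ}
    (hf : ContDiff ℝ (n + 1) f) {b u M : ℝ}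
    (hM : ∀ v ∈ Set.uIcc b (b + u), ‖iteratedDeriv (n + 1) f v‖ ≤ M) :
    ‖f (b + u) - ∑ k ∈ Finset.range (n + 1), (u ^ k / k.factorial) • iteratedDeriv k f b‖
      ≤ M * |u| ^ (n + 1) / (n + 1).factorial := by
  have hD (k : ℕ) (v : ℝ) : iteratedFDeriv ℝ k f v (fun _ => u) = u ^ k • iteratedDeriv k f v := by
    simp [iteratedFDeriv_apply_eq_iteratedDeriv_mul_prod]
  have hTaylor := map_add_eq_sum_add_integral_iteratedFDeriv (x := b) (y := u) (n := n)
    fun _ _ => hf.contDiffAt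
  simp only [hD, smul_smul, ← div_eq_inv_mul] at hTaylor
  rw [hTaylor, add_sub_cancel_left, norm_smul, norm_inv, Real.norm_natCast]
  have hR : ‖∫ t in (0 : ℝ)..1, ((1 - t) ^ n * u ^ (n + 1)) •
      iteratedDeriv (n + 1) f (b + t • u)‖
        ≤ ∫ t in (0 : ℝ)..1, (1 - t) ^ n * (|u| ^ (n + 1) * M) := by
    refine intervalIntegral.norm_integral_le_of_norm_le zero_le_one ?_
      (Continuous.intervalIntegrable (by fun_prop) _ _)
    filter_upwards with t ht
    have h1t : 0 ≤ 1 - t := sub_nonneg.2 ht.2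
    rw [norm_smul, norm_mul, norm_pow, norm_pow, Real.norm_of_nonneg h1t, Real.norm_eq_abs,
      mul_assoc]
    gcongr
    refine hM _ (segment_eq_uIcc b (b + u) ▸ ?_)
    exact (segment_eq_image' ℝ b (b + u)).symm ▸ ⟨t, ⟨ht.1.le, ht.2⟩, by simp⟩
  have hint : ∫ t in (0 : ℝ)..1, (1 - t) ^ n = 1 / (n + 1) := by
    simp [intervalIntegral.integral_comp_sub_left (fun t => t ^ n)]
  rw [intervalIntegral.integral_mul_const, hint] at hR
  refine (mul_le_mul_of_nonneg_left hR (by positivity)).trans_eq ?_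
  rw [Nat.factorial_succ]
  push_cast
  field_simp

/-- The five-point central-difference approximation of the derivative of `G` at `b` with step `h`,
which is exact on quartic polynomials. -/
def fivePointDeriv (G : ℝ → E) (b h : ℝ) : E :=
  (12 * h)⁻¹ • ((8 : ℝ) • (G (b + h) - G (b - h)) - (G (b + 2 * h) - G (b - 2 * h)))

theorem norm_deriv_sub_fivePointDeriv_le [CompleteSpace E] {G : ℝ → E} (hG : ContDiff ℝ 5 G)
    {b h M : ℝ} (hh : 0 < h)
    (hM : ∀ v ∈ Set.Icc (b - 2 * h) (b + 2 * h), ‖iteratedDeriv 5 G v‖ ≤ M) :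
    ‖deriv G b - fivePointDeriv G b h‖ ≤ M / 18 * h ^ 4 := by
  set R : ℝ → E := fun u =>
    G (b + u) - ∑ k ∈ Finset.range 5, (u ^ k / k.factorial) • iteratedDeriv k G b with hRdef
  have hR {u : ℝ} (hu : |u| ≤ 2 * h) : ‖R u‖ ≤ M * |u| ^ 5 / 120 := by
    refine norm_sub_sum_taylor_le (n := 4) (mod_cast hG) fun v hv => hM v ?_
    have hu' := abs_le.1 hu
    refine Set.uIcc_subset_Icc ?_ ?_ hv <;> constructor <;> linarith
  have habs : |h| = h := abs_of_pos hh
  have hexact : deriv G b - fivePointDeriv G b h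
      = -((12 * h)⁻¹ • ((8 : ℝ) • (R h - R (-h)) - (R (2 * h) - R (-(2 * h))))) := by
    simp only [fivePointDeriv, hRdef, Finset.sum_range_succ, Finset.sum_range_zero, Nat.factorial,
      iteratedDeriv_one, ← sub_eq_add_neg]
    push_cast
    match_scalars <;> field_simp <;> ring
  have h2 : |2 * h| = 2 * h := abs_of_pos (by positivity)
  have h1p := hR (u := h) (by rw [habs]; linarith)
  have h1m := hR (u := -h) (by rw [abs_neg, habs]; linarith)
  have h2p := hR (u := 2 * h) h2.le
  have h2m := hR (u := -(2 * h)) (by rw [abs_neg, h2])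
  rw [abs_neg] at h1m h2m
  rw [habs] at h1p h1m
  rw [h2] at h2p h2m
  rw [hexact, norm_neg, norm_smul, norm_inv, Real.norm_of_nonneg (by positivity)]
  calc (12 * h)⁻¹ * ‖(8 : ℝ) • (R h - R (-h)) - (R (2 * h) - R (-(2 * h)))‖
      ≤ (12 * h)⁻¹ * (8 * (‖R h‖ + ‖R (-h)‖) + (‖R (2 * h)‖ + ‖R (-(2 * h))‖)) := by
        gcongr
        refine (norm_sub_le _ _).trans (add_le_add ?_ (norm_sub_le _ _))
        rw [norm_smul, Real.norm_ofNat]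
        gcongr
        exact norm_sub_le _ _
    _ ≤ (12 * h)⁻¹ * (8 * (M * h ^ 5 / 120 + M * h ^ 5 / 120)
          + (M * (2 * h) ^ 5 / 120 + M * (2 * h) ^ 5 / 120)) := by gcongr
    _ = M / 18 * h ^ 4 := by field_simp; ring

/-- The interpolated value at the common face of the cells `0` and `1` in a row of cells with
averages `A k`, where `k` is the position of the cell along the row; only the two cells on either
side of the face, `k = -1, 0, 1, 2`, enter. -/
def faceInterp (A : ℤ → E) : E :=
  (7 / 12 : ℝ) • (A 0 + A 1) - (1 / 12 : ℝ) • (A (-1) + A 2)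

theorem intervalIntegrable_faceInterp {A : ℝ → ℤ → E} {a b : ℝ}
    (hA : ∀ k, IntervalIntegrable (A · k) volume a b) :
    IntervalIntegrable (fun s => faceInterp (A s)) volume a b :=
  (((hA 0).add (hA 1)).smul _).sub (((hA (-1)).add (hA 2)).smul _)

theorem intervalIntegral_faceInterp {A : ℝ → ℤ → E} {a b : ℝ}
    (hA : ∀ k, IntervalIntegrable (A · k) volume a b) :
    ∫ s in a..b, faceInterp (A s) = faceInterp fun k => ∫ s in a..b, A s k := by
  simp only [faceInterp, ← intervalIntegral.integral_add (hA _) (hA _),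
    ← intervalIntegral.integral_smul]
  exact intervalIntegral.integral_sub (((hA 0).add (hA 1)).smul _) (((hA _).add (hA 2)).smul _)

theorem continuous_intervalAverage {X : Type*} [TopologicalSpace X] {F : X → ℝ → E}
    (hF : Continuous (Function.uncurry F)) (a b : ℝ) :
    Continuous fun x => ⨍ u in a..b, F x u := by
  simp only [interval_average_eq]
  exact (intervalIntegral.continuous_parametric_intervalIntegral_of_continuous' hF _ _).const_smul _

theorem faceInterp_intervalAverage [CompleteSpace E] {g G : ℝ → E} (hg : Continuous g)
    (hG : ∀ u, HasDerivAt G (g u) u) (a h : ℝ) :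
    faceInterp (fun k : ℤ => ⨍ u in a + h * k..a + h * (k + 1), g u)
      = fivePointDeriv G (a + h) h := by
  have havg (k : ℤ) : ⨍ u in a + h * k..a + h * (k + 1), g u
      = h⁻¹ • (G (a + h * (k + 1)) - G (a + h * k)) := by
    rw [interval_average_eq, intervalIntegral.integral_eq_sub_of_hasDerivAt (fun u _ => hG u)
      (hg.intervalIntegrable _ _)]
    congr 2
    ring
  simp only [faceInterp, fivePointDeriv, havg]
  push_cast
  ring_nf
  module

theorem norm_sub_faceInterp_intervalAverage_le [CompleteSpace E] {g : ℝ → E} (hg : ContDiff ℝ 4 g)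
    {a h M : ℝ} (hh : 0 < h)
    (hM : ∀ v ∈ Set.Icc (a - h) (a + 3 * h), ‖iteratedDeriv 4 g v‖ ≤ M) :
    ‖g (a + h) - faceInterp fun k : ℤ => ⨍ u in a + h * k..a + h * (k + 1), g u‖
      ≤ M / 18 * h ^ 4 := by
  set G : ℝ → E := fun u => ∫ v in a..u, g v
  have hGderiv (u : ℝ) : HasDerivAt G (g u) u :=
    (hg.continuous.integral_hasStrictDerivAt a u).hasDerivAt
  have hderiv : deriv G = g := funext fun u => (hGderiv u).deriv
  have hG : ContDiff ℝ 5 G := by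
    refine contDiff_succ_iff_deriv (n := 4).2 ⟨fun u => (hGderiv u).differentiableAt, by simp, ?_⟩
    rwa [hderiv]
  rw [faceInterp_intervalAverage hg.continuous hGderiv, ← hderiv]
  refine norm_deriv_sub_fivePointDeriv_le hG hh fun v hv => ?_
  rw [iteratedDeriv_succ', hderiv]
  exact hM v ⟨by linarith [hv.1], by linarith [hv.2]⟩

end Interpolation

section LineRestriction

variable {E F : Type*} [NormedAddCommGroup E] [NormedSpace ℝ E] [NormedAddCommGroup F]
  [NormedSpace ℝ F]

theorem iteratedDeriv_comp_add_smul {f : E → F} {n : ℕ} (hf : ContDiff ℝ n f) (p v : E) (t : ℝ) :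
    iteratedDeriv n (fun u : ℝ => f (p + u • v)) t =
      iteratedFDeriv ℝ n f (p + t • v) fun _ => v := by
  induction n generalizing t with
  | zero => simp
  | succ n ih =>
    rw [iteratedDeriv_succ, funext (ih (hf.of_le (mod_cast n.le_succ)))]
    exact ContDiffAt.deriv_fderiv_add_smul (mod_cast hf.contDiffAt)

theorem norm_iteratedDeriv_comp_add_smul_le {f : E → F} {n : ℕ} (hf : ContDiff ℝ n f) (p v : E)
    (t : ℝ) :
    ‖iteratedDeriv n (fun u : ℝ => f (p + u • v)) t‖
      ≤ ‖iteratedFDeriv ℝ n f (p + t • v)‖ * ‖v‖ ^ n := by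
  rw [iteratedDeriv_comp_add_smul hf]
  simpa using (iteratedFDeriv ℝ n f (p + t • v)).le_opNorm fun _ => v

end LineRestriction

section Cells

variable {d d' : Fin 2}

theorem norm_ev (i : Fin 2) : ‖ev i‖ = 1 := by
  simp [ev]

theorem norm_smul_ev_add_smul_ev_le (r u : ℝ) (i j : Fin 2) :
    ‖r • ev i + u • ev j‖ ≤ |r| + |u| := by
  simpa [norm_smul, norm_ev] using norm_add_le (r • ev i) (u • ev j)

theorem measurePreserving_add_smul_ev_add_smul_ev (hdd' : d' ≠ d) (x : EuclideanSpace ℝ (Fin 2)) :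
    MeasurePreserving fun z : ℝ × ℝ => x + z.1 • ev d' + z.2 • ev d := by
  have hto : MeasurePreserving fun z : ℝ × ℝ => !₂[z.1, z.2] :=
    (PiLp.volume_preserving_toLp (Fin 2)).comp ((volume_preserving_finTwoArrow ℝ).symm _)
  obtain ⟨rfl, rfl⟩ | ⟨rfl, rfl⟩ : (d' = 0 ∧ d = 1) ∨ (d' = 1 ∧ d = 0) := by omega
  · have hmap : (fun z : ℝ × ℝ => x + z.1 • ev 0 + z.2 • ev 1) =
        (x + ·) ∘ fun z : ℝ × ℝ => !₂[z.1, z.2] := by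
      ext z i
      fin_cases i <;> simp [ev]
    exact hmap ▸ (measurePreserving_add_left volume x).comp hto
  · have hmap : (fun z : ℝ × ℝ => x + z.1 • ev 1 + z.2 • ev 0) =
        (x + ·) ∘ (fun z : ℝ × ℝ => !₂[z.1, z.2]) ∘ Prod.swap := by
      ext z i
      fin_cases i <;> simp [ev]
    exact hmap ▸ (measurePreserving_add_left volume x).comp
      (hto.comp Measure.measurePreserving_swap)

theorem preimage_fvCell (hdd' : d' ≠ d) (x : EuclideanSpace ℝ (Fin 2)) (h : ℝ) (j : Fin 2 → ℤ) :
    (fun z : ℝ × ℝ => x + z.1 • ev d' + z.2 • ev d) ⁻¹' fvCell x h j =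
      Set.Icc (h * j d') (h * j d' + h) ×ˢ Set.Icc (h * j d) (h * j d + h) := by
  ext z
  obtain ⟨rfl, rfl⟩ | ⟨rfl, rfl⟩ : (d' = 0 ∧ d = 1) ∨ (d' = 1 ∧ d = 0) := by omega
  all_goals
    simp [fvCell, ev, Fin.forall_fin_two, Set.mem_prod, add_assoc, and_comm, -Set.Icc_prod_Icc]

theorem setIntegral_fvCell (hdd' : d' ≠ d) (f : EuclideanSpace ℝ (Fin 2) → ℝ)
    (x : EuclideanSpace ℝ (Fin 2)) (h : ℝ) (j : Fin 2 → ℤ) :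
    ∫ y in fvCell x h j, f y =
      ∫ z in Set.Icc (h * j d') (h * j d' + h) ×ˢ Set.Icc (h * j d) (h * j d + h),
        f (x + z.1 • ev d' + z.2 • ev d) := by
  have hinj : Function.Injective fun z : ℝ × ℝ => x + z.1 • ev d' + z.2 • ev d := by
    intro z w hzw
    refine Prod.ext ?_ ?_
    · simpa [ev, hdd', hdd'.symm] using congr($hzw d')
    · simpa [ev, hdd', hdd'.symm] using congr($hzw d)
  have hemb := Continuous.measurableEmbedding (by fun_prop) hinj
  rw [← (measurePreserving_add_smul_ev_add_smul_ev hdd' x).setIntegral_preimage_emb hemb,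
    preimage_fvCell hdd']

theorem cellAvg_eq_integral_intervalAverage (hdd' : d' ≠ d) {f : EuclideanSpace ℝ (Fin 2) → ℝ}
    (hf : Continuous f) (x : EuclideanSpace ℝ (Fin 2)) {h : ℝ} (hh : 0 < h) (j : Fin 2 → ℤ) :
    cellAvg f x h j = ∫ s in (0 : ℝ)..1, ⨍ u in h * j d..h * (j d + 1),
      f (x + (h * (j d' + s)) • ev d' + u • ev d) := by
  have hfubini : ∫ y in fvCell x h j, f y = ∫ r in h * j d'..h * j d' + h,
      ∫ u in h * j d..h * (j d + 1), f (x + r • ev d' + u • ev d) := by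
    rw [setIntegral_fvCell hdd', Measure.volume_eq_prod, setIntegral_prod,
      integral_Icc_eq_integral_Ioc, ← intervalIntegral.integral_of_le (by linarith)]
    · simp only [integral_Icc_eq_integral_Ioc, mul_add, mul_one]
      simp only [intervalIntegral.integral_of_le (le_add_of_nonneg_right hh.le)]
    · exact (Continuous.continuousOn (by fun_prop)).integrableOn_compact
        (isCompact_Icc.prod isCompact_Icc)
  have hrescale := intervalIntegral.smul_integral_comp_add_mul (a := 0) (b := 1)
    (fun r => ∫ u in h * j d..h * (j d + 1), f (x + r • ev d' + u • ev d)) h (h * j d')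
  simp only [mul_zero, add_zero, mul_one, ← mul_add] at hrescale
  rw [cellAvg, hfubini, ← hrescale]
  have hlen : h * (j d + 1) - h * j d = h := by ring
  simp only [interval_average_eq, hlen, smul_eq_mul, intervalIntegral.integral_const_mul]
  field_simp

theorem abs_segAvg_sub_faceInterp_cellAvg_le (hdd' : d' ≠ d) {f : EuclideanSpace ℝ (Fin 2) → ℝ}
    (hf : ContDiff ℝ 4 f) {x : EuclideanSpace ℝ (Fin 2)} {h M : ℝ} (hh : 0 < h)
    (hM : ∀ r ∈ Set.Icc 0 h, ∀ u ∈ Set.Icc (-h) (3 * h),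
      ‖iteratedFDeriv ℝ 4 f (x + r • ev d' + u • ev d)‖ ≤ M) :
    |segAvg f (x + h • ev d) (x + h • ev d + h • ev d')
      - faceInterp fun k => cellAvg f x h (Pi.single d k)| ≤ M / 18 * h ^ 4 := by
  have hfc := hf.continuous
  set g : ℝ → ℝ → ℝ := fun s u => f (x + (h * s) • ev d' + u • ev d) with hg
  have hseg : segAvg f (x + h • ev d) (x + h • ev d + h • ev d') = ∫ s in (0 : ℝ)..1, g s h := by
    unfold segAvg
    congr! 3 with s
    module
  have hcell (k : ℤ) : cellAvg f x h (Pi.single d k)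
      = ∫ s in (0 : ℝ)..1, ⨍ u in h * k..h * (k + 1), g s u := by
    simp [cellAvg_eq_integral_intervalAverage hdd' hfc x hh, hdd', hg]
  have hA (k : ℤ) : IntervalIntegrable (fun s => ⨍ u in h * k..h * (k + 1), g s u) volume 0 1 :=
    (continuous_intervalAverage (by fun_prop) _ _).intervalIntegrable _ _
  simp only [hcell]
  rw [hseg, ← intervalIntegral_faceInterp hA, ← intervalIntegral.integral_sub
    (Continuous.intervalIntegrable (by fun_prop) _ _) (intervalIntegrable_faceInterp hA)]
  suffices hpt : ∀ s ∈ Set.uIoc (0 : ℝ) 1,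
      ‖g s h - faceInterp fun k : ℤ => ⨍ u in h * k..h * (k + 1), g s u‖ ≤ M / 18 * h ^ 4 by
    simpa using intervalIntegral.norm_integral_le_of_norm_le_const hpt
  intro s hs
  rw [Set.uIoc_of_le zero_le_one] at hs
  have hr : h * s ∈ Set.Icc 0 h := ⟨mul_nonneg hh.le hs.1.le, mul_le_of_le_one_right hh.le hs.2⟩
  have hline := norm_sub_faceInterp_intervalAverage_le (g := g s) (a := 0) (M := M)
    (hf.comp (by fun_prop)) hh fun u hu => by
      refine (norm_iteratedDeriv_comp_add_smul_le (n := 4) hf _ _ _).trans ?_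
      simpa [norm_ev] using hM _ hr u (by simpa using hu)
  simpa only [zero_add] using hline

end Cells

/-- Fourth-order accuracy of the face-interpolation formula: the average of a
`C⁴` function over the higher face of the cell `j = 0` in dimension `d` equals
`7/12 (A(0) + A(e^d)) - 1/12 (A(-e^d) + A(2e^d))` up to `O(h⁴)`. -/
theorem face_interpolation_fourth_order (x : EuclideanSpace ℝ (Fin 2))
    (d d' : Fin 2) (hdd' : d' ≠ d)
    (f : EuclideanSpace ℝ (Fin 2) → ℝ) (hf : ContDiff ℝ 4 f) :
    ∃ C > (0 : ℝ), ∃ h₀ > (0 : ℝ), ∀ h : ℝ, 0 < h → h < h₀ →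
      |segAvg f (x + h • ev d) (x + h • ev d + h • ev d')
        - ((7 / 12) * (cellAvg f x h 0 + cellAvg f x h (Pi.single d 1))
            - (1 / 12) * (cellAvg f x h (Pi.single d (-1)) + cellAvg f x h (Pi.single d 2)))|
        ≤ C * h ^ 4 := by
  obtain ⟨M, hM⟩ := (isCompact_closedBall x 4).exists_bound_of_continuousOn
    (hf.continuous_iteratedFDeriv (m := 4) le_rfl).continuousOn
  have hM₀ : 0 ≤ M := (norm_nonneg _).trans (hM x (by simp))
  refine ⟨M / 18 + 1, by positivity, 1, one_pos, fun h hh h1 => ?_⟩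
  have hsub {r u : ℝ} (hr : r ∈ Set.Icc 0 h) (hu : u ∈ Set.Icc (-h) (3 * h)) :
      x + r • ev d' + u • ev d ∈ Metric.closedBall x 4 := by
    have hr₁ : |r| ≤ 1 := abs_le.2 ⟨by linarith [hr.1], by linarith [hr.2]⟩
    have hu₃ : |u| ≤ 3 := abs_le.2 ⟨by linarith [hu.1], by linarith [hu.2]⟩
    rw [mem_closedBall_iff_norm, add_assoc, add_sub_cancel_left]
    linarith [norm_smul_ev_add_smul_ev_le r u d' d]
  have hbound := abs_segAvg_sub_faceInterp_cellAvg_le hdd' hf hh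
    fun r hr u hu => hM _ (hsub hr hu)
  simp only [faceInterp, Pi.single_zero, smul_eq_mul] at hbound
  exact hbound.trans (by gcongr; linarith)
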